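/- The Poisson transform h(x) = Σ_{n≥2} E(H_n) x^n e^{-x}/n! satisfies the functional equation h(x) = h(px) + h(qx) e^{-px} + 1 - (1+x)e^{-x} for all x > 0. -/

import Mathlib

/-!
Binomial thinning of a Poisson variable is again Poisson: if `N` is Poisson with mean `x` and `S`
is binomial with parameters `N` and `p`, then `S` is Poisson with mean `p * x`. So averaging a
sequence `a` against the binomial law turns its Poisson transform at `x` into the one at `p * x`;
likewise the factor `q ^ n` gives the transform at `q * x` times `exp (-(p * x))`. The functional
equation is the image of the recurrence under the Poisson transform, the toll contributing
`P(N ≥ 2) = 1 - (1 + x) * exp (-x)`. The series converge because the expected cost grows at most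
linearly: `n ↦ C * n` is a supersolution of the recurrence once `1 ≤ C * (p * q)`.
-/

open Finset

section BinomialMean

/-- The mean of `a` under the binomial law, `E (a S)` for `S ~ Binomial(n, p)`, when `p + q = 1`.
The weights `p` and `q` are independent arguments, so that they can be replaced by their norms. -/
def binomialMean {R : Type*} [CommSemiring R] (p q : R) (a : ℕ → R) (n : ℕ) : R :=
  ∑ k ∈ range (n + 1), (n.choose k : R) * p ^ k * q ^ (n - k) * a k

lemma binomialMean_natCast {R : Type*} [CommRing R] {p q : R} (hpq : p + q = 1) (n : ℕ) :
    binomialMean p q (fun k => (k : R)) n = n * p := by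
  have hmean := congrArg (Polynomial.eval p) (bernsteinPolynomial.sum_smul R n)
  simp only [Polynomial.eval_finsetSum, bernsteinPolynomial, nsmul_eq_mul, Polynomial.eval_mul,
    Polynomial.eval_natCast, Polynomial.eval_pow, Polynomial.eval_X, Polynomial.eval_sub,
    Polynomial.eval_one] at hmean
  rw [← hmean, ← eq_sub_of_add_eq' hpq]
  exact sum_congr rfl fun k _ => mul_comm _ _

lemma binomialMean_const_mul {R : Type*} [CommSemiring R] (p q c : R) (a : ℕ → R) (n : ℕ) :
    binomialMean p q (fun k => c * a k) n = c * binomialMean p q a n := by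
  simp only [binomialMean, mul_sum, mul_left_comm c]

lemma binomialMean_sub_pow_mul {R : Type*} [CommRing R] (p q : R) (a : ℕ → R) (n : ℕ) :
    binomialMean p q a n - p ^ n * a n =
      ∑ k ∈ range n, (n.choose k : R) * p ^ k * q ^ (n - k) * a k := by
  simp [binomialMean, sum_range_succ]

variable {𝕜 : Type*} [NormedField 𝕜]

lemma norm_binomialMean_sub_pow_mul_le (p q : 𝕜) {a : ℕ → 𝕜} {b : ℕ → ℝ} {n : ℕ}
    (hab : ∀ k < n, ‖a k‖ ≤ b k) :
    ‖binomialMean p q a n - p ^ n * a n‖ ≤ binomialMean ‖p‖ ‖q‖ b n - ‖p‖ ^ n * b n := by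
  rw [binomialMean_sub_pow_mul, binomialMean_sub_pow_mul]
  refine norm_sum_le_of_le _ fun k hk => ?_
  have hchoose : ‖(n.choose k : 𝕜)‖ ≤ n.choose k := by simpa using Nat.norm_cast_le (α := 𝕜) _
  have hk' := hab k (mem_range.mp hk)
  simp only [norm_mul, norm_pow]
  gcongr

lemma mul_le_sub_pow {r s : ℝ} (hr : 0 ≤ r) (hs : 0 ≤ s) (hrs : r + s = 1) {n : ℕ} (hn : 2 ≤ n) :
    r * s ≤ s - s ^ n := by
  have hpow : s ^ n ≤ s ^ 2 := pow_le_pow_of_le_one hs (by linarith) hn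
  obtain rfl : r = 1 - s := by linarith
  linarith

lemma one_sub_pow_sub_pow_mul_norm_le {p q : 𝕜} {a t : ℕ → 𝕜} {n : ℕ}
    (hrec : a n = t n + binomialMean p q a n + q ^ n * a n) :
    (1 - ‖p‖ ^ n - ‖q‖ ^ n) * ‖a n‖ ≤ ‖t n‖ + ‖binomialMean p q a n - p ^ n * a n‖ := by
  have hnorm : ‖a n‖ ≤ ‖t n + (binomialMean p q a n - p ^ n * a n)‖
      + ‖p ^ n * a n + q ^ n * a n‖ := by
    refine (norm_add_le _ _).trans_eq' (congrArg norm ?_)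
    linear_combination -hrec
  have htoll := norm_add_le (t n) (binomialMean p q a n - p ^ n * a n)
  have hdiag := norm_add_le (p ^ n * a n) (q ^ n * a n)
  rw [norm_mul, norm_mul, norm_pow, norm_pow] at hdiag
  linarith

lemma norm_le_mul_of_binomialMean_recurrence {p q : 𝕜} (hp : p ≠ 0) (hq : q ≠ 0)
    (hpq : ‖p‖ + ‖q‖ = 1) {a t : ℕ → 𝕜} {C : ℝ} (h0 : a 0 = 0) (h1 : ‖a 1‖ ≤ C)
    (ht : ∀ n, 2 ≤ n → ‖t n‖ ≤ C * (‖p‖ * ‖q‖) * n)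
    (hrec : ∀ n, 2 ≤ n → a n = t n + binomialMean p q a n + q ^ n * a n) (n : ℕ) :
    ‖a n‖ ≤ C * n := by
  induction n using Nat.strong_induction_on with
  | _ n ih =>
    obtain rfl | rfl | hn : n = 0 ∨ n = 1 ∨ 2 ≤ n := by omega
    · simp [h0]
    · simpa using h1
    have hC : 0 ≤ C := (norm_nonneg _).trans h1
    have hdefect_q : ‖p‖ * ‖q‖ ≤ ‖q‖ - ‖q‖ ^ n :=
      mul_le_sub_pow (norm_nonneg p) (norm_nonneg q) hpq hn
    have hdefect_p : ‖q‖ * ‖p‖ ≤ ‖p‖ - ‖p‖ ^ n :=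
      mul_le_sub_pow (norm_nonneg q) (norm_nonneg p) (by linarith) hn
    have hdefect_pos : 0 < 1 - ‖p‖ ^ n - ‖q‖ ^ n := by
      have : 0 < ‖p‖ * ‖q‖ := by positivity
      linarith
    have hmean : ‖binomialMean p q a n - p ^ n * a n‖ ≤ C * n * (‖p‖ - ‖p‖ ^ n) := by
      have := norm_binomialMean_sub_pow_mul_le p q ih
      rw [binomialMean_const_mul, binomialMean_natCast hpq] at this
      linarith
    have htoll : ‖t n‖ ≤ C * n * (‖q‖ - ‖q‖ ^ n) :=
      calc ‖t n‖ ≤ C * n * (‖p‖ * ‖q‖) := by linarith [ht n hn]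
        _ ≤ C * n * (‖q‖ - ‖q‖ ^ n) := by gcongr
    refine le_of_mul_le_mul_left ?_ hdefect_pos
    calc (1 - ‖p‖ ^ n - ‖q‖ ^ n) * ‖a n‖
        ≤ ‖t n‖ + ‖binomialMean p q a n - p ^ n * a n‖ :=
          one_sub_pow_sub_pow_mul_norm_le (hrec n hn)
      _ ≤ C * n * (‖q‖ - ‖q‖ ^ n) + C * n * (‖p‖ - ‖p‖ ^ n) := add_le_add htoll hmean
      _ = (1 - ‖p‖ ^ n - ‖q‖ ^ n) * (C * n) := by linear_combination C * n * hpq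

end BinomialMean

section PoissonTransform

open NormedSpace (exp exp_add expSeries_div_hasSum_exp)

variable {𝕜 : Type*} [RCLike 𝕜]

/-- `a` has Poisson transform `y` at `x`: the series `∑ a n * x ^ n / n! * exp (-x)`, which for
`0 ≤ x` is `E (a N)` with `N` Poisson of mean `x`, converges to `y`. It is a relation, like
`HasSum`, because a `tsum` would be the junk value `0` on divergent series. -/
def HasPoissonTransform (a : ℕ → 𝕜) (x y : 𝕜) : Prop :=
  HasSum (fun n : ℕ => a n * x ^ n / n.factorial * exp (-x)) y

lemma hasPoissonTransform_one (x : 𝕜) : HasPoissonTransform (fun _ => 1) x 1 := by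
  simpa [HasPoissonTransform, ← exp_add] using (expSeries_div_hasSum_exp x).mul_right (exp (-x))

lemma hasPoissonTransform_ite_lt (x : 𝕜) (m : ℕ) :
    HasPoissonTransform (fun n => if n < m then 0 else 1) x
      (1 - (∑ n ∈ range m, x ^ n / n.factorial) * exp (-x)) := by
  have hlow : HasSum (fun n : ℕ => if n < m then x ^ n / n.factorial * exp (-x) else 0)
      ((∑ n ∈ range m, x ^ n / n.factorial) * exp (-x)) := by
    simpa +contextual [sum_mul, sum_ite_of_true] using
      hasSum_sum_of_ne_finset_zero (L := .unconditional ℕ) (s := range m)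
        (f := fun n : ℕ => if n < m then x ^ n / (n.factorial : 𝕜) * exp (-x) else 0)
        (by simp +contextual)
  refine HasSum.congr_fun ((hasPoissonTransform_one x).sub hlow) fun n => ?_
  by_cases hn : n < m <;> simp [hn]

lemma hasPoissonTransform_tsum_of_norm_le {a : ℕ → 𝕜} {C r : ℝ} (ha : ∀ n, ‖a n‖ ≤ C * r ^ n)
    (x : 𝕜) :
    HasPoissonTransform a x (∑' n : ℕ, a n * x ^ n / n.factorial * exp (-x)) := by
  refine Summable.hasSum (Summable.mul_right _ (.of_norm_bounded
    ((Real.summable_pow_div_factorial (r * ‖x‖)).mul_left C) fun n => ?_))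
  calc ‖a n * x ^ n / n.factorial‖ = ‖a n‖ * (‖x‖ ^ n / n.factorial) := by
        simp [mul_div_assoc]
    _ ≤ C * r ^ n * (‖x‖ ^ n / n.factorial) := by gcongr; exact ha n
    _ = C * ((r * ‖x‖) ^ n / n.factorial) := by ring

lemma hasPoissonTransform_tsum_of_binomialMean_recurrence {p q : 𝕜} (hp : p ≠ 0) (hq : q ≠ 0)
    (hpq : ‖p‖ + ‖q‖ = 1) {a t : ℕ → 𝕜} {T : ℝ} (h0 : a 0 = 0)
    (ht : ∀ n, 2 ≤ n → ‖t n‖ ≤ T * n)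
    (hrec : ∀ n, 2 ≤ n → a n = t n + binomialMean p q a n + q ^ n * a n) (x : 𝕜) :
    HasPoissonTransform a x (∑' n : ℕ, a n * x ^ n / n.factorial * exp (-x)) := by
  set C := max ‖a 1‖ (T / (‖p‖ * ‖q‖))
  have : 0 ≤ C := (norm_nonneg _).trans (le_max_left _ _)
  have hT : T ≤ C * (‖p‖ * ‖q‖) := (div_le_iff₀ (by positivity)).mp (le_max_right _ _)
  have hlinear := norm_le_mul_of_binomialMean_recurrence hp hq hpq h0 (le_max_left _ _)
    (fun n hn => (ht n hn).trans (by gcongr)) hrec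
  refine hasPoissonTransform_tsum_of_norm_le (C := C) (r := 2) (fun n => (hlinear n).trans ?_) x
  gcongr
  exact_mod_cast n.lt_two_pow_self.le

namespace HasPoissonTransform

variable {a b t : ℕ → 𝕜} {p q x y z w : 𝕜}

protected lemma add (ha : HasPoissonTransform a x y) (hb : HasPoissonTransform b x z) :
    HasPoissonTransform (fun n => a n + b n) x (y + z) := by
  simpa only [HasPoissonTransform, add_mul, add_div] using HasSum.add ha hb

lemma pow_mul (hpq : p + q = 1) (ha : HasPoissonTransform a (q * x) y) :
    HasPoissonTransform (fun n => q ^ n * a n) x (y * exp (-(p * x))) := by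
  have hexp : exp (-x) = exp (-(q * x)) * exp (-(p * x)) := by
    rw [← exp_add]; congr 1; linear_combination x * hpq
  refine HasSum.congr_fun (HasSum.mul_right (exp (-(p * x))) ha) fun n => ?_
  rw [hexp, mul_pow]
  ring

protected lemma binomialMean (hpq : p + q = 1) (ha : HasPoissonTransform a (p * x) y) :
    HasPoissonTransform (binomialMean p q a) x y := by
  have hexp : exp (-x) = exp (-(p * x)) * exp (-(q * x)) := by
    rw [← exp_add]; congr 1; linear_combination x * hpq
  have hone := hasPoissonTransform_one (q * x)
  have hcauchy := hasSum_sum_range_mul_of_summable_norm ha.summable.norm hone.summable.norm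
  rw [ha.tsum_eq, hone.tsum_eq, mul_one] at hcauchy
  refine HasSum.congr_fun hcauchy fun n => ?_
  rw [binomialMean, sum_mul, sum_div, sum_mul]
  refine sum_congr rfl fun k hk => ?_
  have hkn : k ≤ n := mem_range_succ_iff.mp hk
  have hn : (n.factorial : 𝕜) ≠ 0 := mod_cast n.factorial_ne_zero
  rw [hexp, Nat.cast_choose 𝕜 hkn, mul_pow, mul_pow, ← pow_mul_pow_sub x hkn]
  field_simp

theorem of_binomialMean_recurrence (hpq : p + q = 1)
    (hrec : ∀ n, a n = t n + binomialMean p q a n + q ^ n * a n)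
    (ht : HasPoissonTransform t x w) (hap : HasPoissonTransform a (p * x) y)
    (haq : HasPoissonTransform a (q * x) z) :
    HasPoissonTransform a x (w + y + z * exp (-(p * x))) := by
  rw [funext hrec]
  exact (ht.add (hap.binomialMean hpq)).add (haq.pow_mul hpq)

end HasPoissonTransform

end PoissonTransform

theorem poisson_transform_functional_equation_general {𝕜 : Type*} [RCLike 𝕜]
    (p q : ℝ) (hp : 0 < p) (hp1 : p < 1) (hq : q = 1 - p)
    (EH : ℕ → 𝕜) (hEH0 : EH 0 = 0) (hEH1 : EH 1 = 0)
    (hrec : ∀ n, 2 ≤ n →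
      EH n = 1 + (∑ k ∈ range (n + 1), (n.choose k : 𝕜) * (p : 𝕜) ^ k * (q : 𝕜) ^ (n - k) * EH k)
        + (q : 𝕜) ^ n * EH n)
    (h : 𝕜 → 𝕜)
    (hdef : ∀ x, h x = ∑' n : ℕ, EH n * x ^ n / n.factorial * NormedSpace.exp (-x)) (x : 𝕜) :
    h x = h (p * x) + h (q * x) * NormedSpace.exp (-(p * x)) + 1
      - (1 + x) * NormedSpace.exp (-x) := by
  have hq0 : 0 < q := by linarith
  have hpq : (p : 𝕜) + q = 1 := by simp [hq]
  have hnorm : ‖(p : 𝕜)‖ + ‖(q : 𝕜)‖ = 1 := by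
    rw [RCLike.norm_of_nonneg hp.le, RCLike.norm_of_nonneg hq0.le, hq, add_sub_cancel]
  have htransform (y : 𝕜) : HasPoissonTransform EH y (h y) := by
    rw [hdef]
    refine hasPoissonTransform_tsum_of_binomialMean_recurrence (t := fun _ => 1) (T := 1)
      (RCLike.ofReal_ne_zero.mpr hp.ne') (RCLike.ofReal_ne_zero.mpr hq0.ne') hnorm hEH0
      (fun n hn => ?_) hrec y
    rw [norm_one, one_mul]
    exact_mod_cast one_le_two.trans hn
  have hrec' (n : ℕ) : EH n =
      (if n < 2 then 0 else 1) + binomialMean (p : 𝕜) q EH n + (q : 𝕜) ^ n * EH n := by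
    obtain hn | hn := lt_or_ge n 2
    · interval_cases n <;> simp [binomialMean, sum_range_succ, hEH0, hEH1]
    · rw [if_neg hn.not_gt]
      exact hrec n hn
  have hequation := (hasPoissonTransform_ite_lt x 2).of_binomialMean_recurrence hpq hrec'
    (htransform _) (htransform _)
  have hsum : ∑ n ∈ range 2, x ^ n / (n.factorial : 𝕜) = 1 + x := by simp [sum_range_succ]
  rw [(htransform x).unique hequation, hsum]
  ring

/-- The Poisson transform `h(x) = Σ_{n≥2} E(H_n) x^n e^{-x}/n!` of the expected
costs of the leader election algorithm satisfies the functional equation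
`h(x) = h(px) + h(qx) e^{-px} + 1 - (1+x) e^{-x}` for all `x > 0`. -/
theorem poisson_transform_functional_equation
    (p q : ℝ) (hp : 0 < p) (hp1 : p < 1) (hq : q = 1 - p)
    (EH : ℕ → ℝ) (hEH0 : EH 0 = 0) (hEH1 : EH 1 = 0)
    (hrec : ∀ n, 2 ≤ n →
      EH n = 1 + (∑ k ∈ range (n + 1), (n.choose k : ℝ) * p ^ k * q ^ (n - k) * EH k)
        + q ^ n * EH n)
    (h : ℝ → ℝ)
    (hdef : ∀ x : ℝ, h x = ∑' n : ℕ, EH n * x ^ n / n.factorial * Real.exp (-x)) :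
    ∀ x : ℝ, 0 < x →
      h x = h (p * x) + h (q * x) * Real.exp (-(p * x)) + 1 - (1 + x) * Real.exp (-x) := by
  intro x _
  simpa [Real.exp_eq_exp_ℝ] using poisson_transform_functional_equation_general (𝕜 := ℝ) p q hp hp1
    hq EH hEH0 hEH1 hrec h (by simpa [Real.exp_eq_exp_ℝ] using hdef) x
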